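/- Let A be a core synchronous transducer on X_n synchronizing at level k such that for every word Γ ∈ X_n^k and every state q ∈ Q_A there exists a state p ∈ Q_A with s_A(λ_A(Γ, p)) = q. Then for every m ≥ 1, every state of the m-fold product A^m lies in the core of A^m (A^m being synchronizing at level mk). -/

import Mathlib

/-!
The proof is by induction on `m`. Given a target state `u` of `A^(m+1)`, choose `Γ` of length `k`
forcing `u 0`. By the surjectivity hypothesis there are states `p 0, …, p (m-1)` such that passing
`Γ` successively through them produces words forcing `u 1, …, u m`
(`Transducer.exists_init_determining`). Hence every state of `A^(m+1)` whose first `m` coordinates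
are `p` is sent to `u` by `Γ`, whatever its last coordinate. The state `p` of `A^m` is forced by
some word `Δ`, and the first `m` coordinates of `A^(m+1)` evolve exactly as `A^m`
(`Transducer.init_stepW_powT`), so `Δ ++ Γ` forces `u`.
-/


/-- A synchronous transducer with alphabet `X` and state set `Q`:
`step x q` is the state reached after reading letter `x` at state `q`, and
`out x q` is the letter written. -/
structure Transducer (X : Type*) (Q : Type*) where
  step : X → Q → Q
  out : X → Q → X

namespace Transducer

variable {X Q R : Type*}

/-- The transition function extended to words (read left to right). -/
def stepW (T : Transducer X Q) : List X → Q → Q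
  | [], q => q
  | x :: w, q => T.stepW w (T.step x q)

/-- The output function extended to words. -/
def outW (T : Transducer X Q) : List X → Q → List X
  | [], _ => []
  | x :: w, q => T.out x q :: T.outW w (T.step x q)

theorem stepW_append (T : Transducer X Q) (u v : List X) (q : Q) :
    T.stepW (u ++ v) q = T.stepW v (T.stepW u q) := by
  induction u generalizing q with
  | nil => rfl
  | cons x u ih => simpa [stepW] using ih (T.step x q)

/-- `T` is synchronizing at level `k`: the state reached after reading any word of
length `k` is independent of the starting state. -/
def Synchronizing (T : Transducer X Q) (k : ℕ) : Prop :=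
  ∀ Γ : List X, Γ.length = k → ∀ p q : Q, T.stepW Γ p = T.stepW Γ q

/-- A state is in the core of `T` if it is forced by some nonempty word. -/
def InCore (T : Transducer X Q) (q : Q) : Prop :=
  ∃ Γ : List X, Γ ≠ [] ∧ ∀ p : Q, T.stepW Γ p = q

/-- `T` is core if every state is forced. -/
def IsCore (T : Transducer X Q) : Prop := ∀ q : Q, T.InCore q

/-- The map on one-sided infinite sequences induced by the state `q`. -/
def stateMap (T : Transducer X Q) (q : Q) (x : ℕ → X) : ℕ → X :=
  fun i => T.out (x i) (T.stepW ((List.range i).map x) q)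

/-- Every state of `T` is a homeomorphism state. -/
def AllHomeo (T : Transducer X Q) : Prop := ∀ q : Q, Function.Bijective (T.stateMap q)

/-- `T` is invertible: every state acts as a bijection on single letters. -/
def Invertible (T : Transducer X Q) : Prop :=
  ∀ q : Q, Function.Bijective fun x => T.out x q

/-- The map `f_T` on bi-infinite sequences induced by a transducer synchronizing at
level `k`; the letter at position `i` of the image is obtained by processing `x i`
from the state reached after reading `x (i-k), …, x (i-1)` starting at the basepoint
state `q0` (when `T` is synchronizing at level `k` this is the forced state, and the
map does not depend on the choice of `q0`). -/
def zmap (T : Transducer X Q) (k : ℕ) (q0 : Q) (x : ℤ → X) : ℤ → X :=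
  fun i => T.out (x i) (T.stepW ((List.range k).map fun j => x (i - (k : ℤ) + (j : ℤ))) q0)

/-- The composite map on one-sided sequences represented by a word of states,
applied leftmost letter first. -/
def wordMap (T : Transducer X Q) : List Q → (ℕ → X) → ℕ → X
  | [], x => x
  | q :: w, x => T.wordMap w (T.stateMap q x)

/-- A bi-infinite sequence is rational if it is eventually periodic in both directions. -/
def IsRational (z : ℤ → X) : Prop :=
  ∃ (N p q : ℕ), 0 < p ∧ 0 < q ∧
    (∀ i : ℤ, (N : ℤ) ≤ i → z (i + (p : ℤ)) = z i) ∧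
    (∀ i : ℤ, i ≤ -(N : ℤ) → z (i - (q : ℤ)) = z i)

/-- The inverse transducer of an invertible transducer. -/
noncomputable def invT (T : Transducer X Q) (hX : Nonempty X) : Transducer X Q where
  step := fun y q => T.step (@Function.invFun X X hX (fun x => T.out x q) y) q
  out := fun y q => @Function.invFun X X hX (fun x => T.out x q) y

/-- The product transducer `A*B`. -/
def prodT (T : Transducer X Q) (S : Transducer X R) : Transducer X (Q × R) where
  step := fun x pq => (T.step x pq.1, S.step (T.out x pq.1) pq.2)
  out := fun x pq => S.out (T.out x pq.1) pq.2

/-- The `m`-fold power `A^m`, with state set `Q^m`. -/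
def powT (T : Transducer X Q) : (m : ℕ) → Transducer X (Fin m → Q)
  | 0 => { step := fun _ u => u, out := fun x _ => x }
  | m + 1 =>
    { step := fun x u =>
        Fin.cons (T.step x (u 0)) ((T.powT m).step (T.out x (u 0)) fun i => u i.succ)
      out := fun x u => (T.powT m).out (T.out x (u 0)) fun i => u i.succ }

/-- The restriction of a transducer to its core. -/
def coreT (T : Transducer X Q) : Transducer X {q : Q // T.InCore q} where
  step := fun x q =>
    ⟨T.step x q.1, by
      obtain ⟨Γ, hΓ, h⟩ := q.2
      exact ⟨Γ ++ [x], by simp, fun p => by rw [T.stepW_append, h p]; rfl⟩⟩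
  out := fun x q => T.out x q.1

/-- `Γ_l^P`: the word obtained by passing `Γ` successively through the states in `P`. -/
def iterW (T : Transducer X Q) : List Q → List X → List X
  | [], Γ => Γ
  | p :: P, Γ => T.iterW P (T.outW Γ p)

/-- The list of states `out_i^P` reached when passing `Γ` successively through `P`. -/
def iterOuts (T : Transducer X Q) : List Q → List X → List Q
  | [], _ => []
  | p :: P, Γ => T.stepW Γ p :: T.iterOuts P (T.outW Γ p)

/-- `((t :: Tt), (p :: Tp), Γ)` is a split (forced states computed from the
basepoint state `q0`). -/
def SplitCond (T : Transducer X Q) (q0 : Q) (t p : Q) (Tt Tp : List Q) (Γ : List X) : Prop :=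
  Tt.length = Tp.length ∧
  T.iterOuts (t :: Tt) Γ = T.iterOuts (p :: Tp) Γ ∧
  (∀ i : ℕ, 1 ≤ i → i < (t :: Tt).length →
    T.stepW (T.iterW ((t :: Tt).take i) Γ) q0 = T.stepW (T.iterW ((p :: Tp).take i) Γ) q0) ∧
  T.stepW (T.iterW (t :: Tt) Γ) q0 ≠ T.stepW (T.iterW (p :: Tp) Γ) q0

/-- The bottom of the split `((t :: Tt), (p :: Tp), Γ)` depends only on its top. -/
def DependsOnTop (T : Transducer X Q) (q0 : Q) (t p : Q) (Tt Tp : List Q) (Γ : List X) : Prop :=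
  ∀ U U' : List Q, U.length = Tt.length → U'.length = Tp.length →
    T.iterOuts (t :: U) Γ = T.iterOuts (t :: Tt) Γ ∧
    T.iterOuts (p :: U') Γ = T.iterOuts (p :: Tp) Γ ∧
    T.stepW (T.iterW (t :: U) Γ) q0 = T.stepW (T.iterW (t :: Tt) Γ) q0 ∧
    T.stepW (T.iterW (p :: U') Γ) q0 = T.stepW (T.iterW (p :: Tp) Γ) q0

/-- The edge relation of the graph of bad pairs `G_r(T)` (on unordered pairs of
states, modelled as subsets of `Q`). -/
def BadEdge (T : Transducer X Q) (q0 : Q) (r : ℕ) (v w : Set Q) : Prop :=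
  ∃ (t p : Q) (Tt Tp : List Q) (Γ : List X), Γ.length = r ∧
    T.SplitCond q0 t p Tt Tp Γ ∧ T.DependsOnTop q0 t p Tt Tp Γ ∧
    v = {t, p} ∧
    w = {T.stepW (T.iterW (t :: Tt) Γ) q0, T.stepW (T.iterW (p :: Tp) Γ) q0}

/-- The `r` splitting length of `T`, as an extended natural number (`⊤` if no split
at level `r` exists). -/
noncomputable def splittingLength (T : Transducer X Q) (q0 : Q) (r : ℕ) : ℕ∞ :=
  sInf {L : ℕ∞ | ∃ (t p : Q) (Tt Tp : List Q) (Γ : List X),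
    Γ.length = r ∧ L = ((Tt.length + 1 : ℕ) : ℕ∞) ∧ T.SplitCond q0 t p Tt Tp Γ}

/-- The `i`-th rotation of a word. -/
def rotWord (i : ℕ) (Γ : List X) : List X :=
  Γ.drop (Γ.length - i) ++ Γ.take (Γ.length - i)

/-- A nonempty word is prime if it is not a proper power of a shorter word. -/
def IsPrimeWord (Γ : List X) : Prop :=
  Γ ≠ [] ∧ ∀ (δ : List X) (m : ℕ), 2 ≤ m → Γ ≠ (List.replicate m δ).flatten

/-- The length of the orbit of `Γ` under `f`. -/
noncomputable def orbitLen (f : List X → List X) (Γ : List X) : ℕ :=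
  (Set.range fun m : ℕ => f^[m] Γ).ncard

/-- The minimal `s ≥ 1` such that `f^[s] Γ` is a rotation of `Γ`
(for words of length `k`). -/
noncomputable def sigmaIdx (f : List X → List X) (k : ℕ) (Γ : List X) : ℕ :=
  sInf {s : ℕ | 1 ≤ s ∧ ∃ i < k, f^[s] Γ = rotWord i Γ}

/-- The rotation index attained at the minimal exponent `sigmaIdx`. -/
noncomputable def rhoIdx (f : List X → List X) (k : ℕ) (Γ : List X) : ℕ :=
  sInf {i : ℕ | i < k ∧ f^[sigmaIdx f k Γ] Γ = rotWord i Γ}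

end Transducer

namespace Transducer

variable {X Q : Type*}

theorem length_outW (T : Transducer X Q) (Γ : List X) (q : Q) :
    (T.outW Γ q).length = Γ.length := by
  induction Γ generalizing q with
  | nil => rfl
  | cons x Γ ih => simp [outW, ih]

theorem stepW_powT_succ (T : Transducer X Q) (m : ℕ) (Γ : List X) (u : Fin (m + 1) → Q) :
    (T.powT (m + 1)).stepW Γ u =
      Fin.cons (T.stepW Γ (u 0)) ((T.powT m).stepW (T.outW Γ (u 0)) (Fin.tail u)) := by
  induction Γ generalizing u with
  | nil => exact (Fin.cons_self_tail u).symm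
  | cons x Γ ih =>
    simp only [stepW, outW]
    rw [ih]
    rfl

theorem init_cons {m : ℕ} (a : Q) (v : Fin (m + 1) → Q) :
    (Fin.init (Fin.cons a v : Fin (m + 2) → Q) : Fin (m + 1) → Q) = Fin.cons a (Fin.init v) := by
  ext i
  refine Fin.cases ?_ (fun j => ?_) i
  · rfl
  · rfl

/-- Information flows only from earlier to later coordinates of a power: dropping the last
coordinate intertwines `A^(m+1)` with `A^m`. -/
theorem init_stepW_powT (T : Transducer X Q) (m : ℕ) (Γ : List X) (u : Fin (m + 1) → Q) :
    (Fin.init ((T.powT (m + 1)).stepW Γ u) : Fin m → Q) = (T.powT m).stepW Γ (Fin.init u) := by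
  induction m generalizing Γ with
  | zero => exact Subsingleton.elim _ _
  | succ m ih =>
    rw [stepW_powT_succ, init_cons, ih, stepW_powT_succ T m]
    rfl

/-- In a transducer synchronizing at level `k`, a core state is forced by a word of length
exactly `k`. -/
theorem exists_forcing_word (T : Transducer X Q) (x₀ : X) {k : ℕ} (hsync : T.Synchronizing k)
    {q : Q} (hq : T.InCore q) :
    ∃ Γ : List X, Γ.length = k ∧ ∀ p, T.stepW Γ p = q := by
  obtain ⟨w, -, hw⟩ := hq
  -- Padding on the left makes the word long enough to have a suffix of length `k`.
  set W := List.replicate k x₀ ++ w with hW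
  have hlen : (W.drop w.length).length = k := by simp [hW]
  refine ⟨W.drop w.length, hlen, fun p => ?_⟩
  rw [hsync _ hlen p (T.stepW (W.take w.length) p), ← stepW_append, List.take_append_drop,
    hW, stepW_append, hw]

/-- If `Γ` forces the first coordinate of `u`, then `Γ` sends to `u` every state of `A^(m+1)` with
suitable first `m` coordinates, independently of the last coordinate. -/
theorem exists_init_determining (T : Transducer X Q) {k : ℕ}
    (hsur : ∀ Γ : List X, Γ.length = k → ∀ q : Q, ∃ p : Q,
      ∀ p' : Q, T.stepW (T.outW Γ p) p' = q)
    (m : ℕ) (Γ : List X) (hΓ : Γ.length = k) (u : Fin (m + 1) → Q)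
    (hu : ∀ p, T.stepW Γ p = u 0) :
    ∃ p : Fin m → Q, ∀ v : Fin (m + 1) → Q, Fin.init v = p → (T.powT (m + 1)).stepW Γ v = u := by
  induction m generalizing Γ with
  | zero =>
    refine ⟨Fin.elim0, fun v _ => ?_⟩
    rw [stepW_powT_succ, hu]
    ext i
    rw [Fin.fin_one_eq_zero i]
    rfl
  | succ m ih =>
    obtain ⟨a, ha⟩ := hsur Γ hΓ (u 1)
    obtain ⟨p, hp⟩ := ih (T.outW Γ a) ((T.length_outW Γ a).trans hΓ) (Fin.tail u) ha
    refine ⟨Fin.cons a p, fun v hv => ?_⟩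
    have h0 : v 0 = a := congrFun hv 0
    have ht : Fin.init (Fin.tail v) = p := by
      ext i
      exact congrFun hv i.succ
    rw [stepW_powT_succ, hu, h0, hp _ ht]
    exact Fin.cons_self_tail u

end Transducer

/-- Let `A` be a core synchronous transducer on `X_n` synchronizing at
level `k` such that for every word `Γ` of length `k` and every state `q` there is a
state `p` with `s_A(λ_A(Γ, p)) = q`.  Then for every `m ≥ 1` every state of `A^m` lies
in the core of `A^m`. -/
theorem core_eq_power
    (n : ℕ) (hn : 2 ≤ n) {Q : Type*} [Fintype Q]
    (A : Transducer (Fin n) Q) (k : ℕ)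
    (hcore : A.IsCore) (hsync : A.Synchronizing k)
    (hsur : ∀ Γ : List (Fin n), Γ.length = k → ∀ q : Q, ∃ p : Q,
      ∀ p' : Q, A.stepW (A.outW Γ p) p' = q) :
    ∀ m : ℕ, 1 ≤ m → ∀ u : Fin m → Q, (A.powT m).InCore u := by
  have x₀ : Fin n := ⟨0, by omega⟩
  -- For `m = 0` there is only one state, so the induction may start there.
  suffices h : ∀ m : ℕ, ∀ u : Fin m → Q, (A.powT m).InCore u from fun m _ => h m
  intro m
  induction m with
  | zero => exact fun u => ⟨[x₀], by simp, fun p => Subsingleton.elim _ _⟩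
  | succ m ih =>
    intro u
    obtain ⟨Γ, hΓ, hu⟩ := Transducer.exists_forcing_word A x₀ hsync (hcore (u 0))
    obtain ⟨p, hp⟩ := Transducer.exists_init_determining A hsur m Γ hΓ u hu
    obtain ⟨Δ, hΔ, hf⟩ := ih p
    refine ⟨Δ ++ Γ, by simp [hΔ], fun v => ?_⟩
    rw [Transducer.stepW_append]
    exact hp _ (by rw [Transducer.init_stepW_powT, hf])
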